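/- Let q ≥ 2 be an even integer, let λ_i > 0 for i ∈ ℕ, and let {f_n^{(i)} : n, i ∈ ℕ} be a bi-indexed family of symmetric functions in L²(ℝ₊^q) such that for all i, j ∈ ℕ: ⟨f_n^{(i)}, f_n^{(j)}⟩ → δ_{ij} λ_i as n → ∞, ‖f_n^{(i)} ⌢_{q/2} f_n^{(i)} − f_n^{(i)}‖ → 0, and ‖f_n^{(i)} ⌢_{q/2} f_n^{(j)}‖ → 0 whenever i ≠ j. Then for every k ≥ 1 and all indices i₁, …, i_{k+1} ∈ ℕ, the inner product ⟨f_n^{(i₁)} ⌢_{q/2} f_n^{(i₂)} ⌢_{q/2} ⋯ ⌢_{q/2} f_n^{(i_k)}, f_n^{(i_{k+1})}⟩ (iterated contraction bracketed from the left) converges to λ_{i₁} if i₁ = i₂ = ⋯ = i_{k+1}, and converges to 0 otherwise. -/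

import Mathlib

open MeasureTheory Filter Topology

noncomputable section

/-- The positive orthant `ℝ₊ⁿ` inside `ℝⁿ`. -/
def posOrthant (n : ℕ) : Set (Fin n → ℝ) := {x | ∀ i, 0 ≤ x i}

/-- Lebesgue measure restricted to the positive orthant; the measure underlying `L²(ℝ₊ⁿ)`. -/
def μpos (n : ℕ) : MeasureTheory.Measure (Fin n → ℝ) :=
  MeasureTheory.volume.restrict (posOrthant n)

/-- Total extension of a finite tuple, giving the junk value `0` out of range. -/
def pad {k : ℕ} (t : Fin k → ℝ) (i : ℕ) : ℝ := if h : i < k then t ⟨i, h⟩ else 0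

/-- The `L²` inner product `⟨f, g⟩ = ∫ f ⬝ conj g` over the positive orthant. -/
def L2inner (n : ℕ) (f g : (Fin n → ℝ) → ℂ) : ℂ :=
  ∫ x, f x * (starRingEnd ℂ) (g x) ∂(μpos n)

/-- The `L²` norm over the positive orthant. -/
def L2norm (n : ℕ) (f : (Fin n → ℝ) → ℂ) : ℝ :=
  Real.sqrt (∫ x, ‖f x‖ ^ 2 ∂(μpos n))

/-- The adjoint `f*(t₁,…,tₙ) = conj (f (tₙ,…,t₁))`. -/
def adjF (n : ℕ) (f : (Fin n → ℝ) → ℂ) : (Fin n → ℝ) → ℂ :=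
  fun t => (starRingEnd ℂ) (f fun i => t i.rev)

/-- `f` is symmetric when `f = f*` a.e. on the positive orthant. -/
def IsSymmFn (n : ℕ) (f : (Fin n → ℝ) → ℂ) : Prop :=
  ∀ᵐ t ∂(μpos n), f t = adjF n f t

/-- Reindexing a multivariate function along an equality of dimensions. -/
def reindex {a b : ℕ} (h : a = b) (F : (Fin a → ℝ) → ℂ) : (Fin b → ℝ) → ℂ :=
  fun t => F fun j => t (Fin.cast h j)

/-- The integrand (in the `s`-variables) of the `p`-th arc contraction
`(f ⌢_p g)(t₁,…,t_{m+n-2p}) = ∫ f(t₁,…,t_{m-p},s_p,…,s₁) g(s₁,…,s_p,t_{m-p+1},…,t_{m+n-2p}) ds`. -/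
def arcKer (m n p : ℕ) (f : (Fin m → ℝ) → ℂ) (g : (Fin n → ℝ) → ℂ)
    (t : Fin (m + n - 2 * p) → ℝ) (s : Fin p → ℝ) : ℂ :=
  f (fun j => if (j : ℕ) < m - p then pad t j else pad s (m - 1 - (j : ℕ))) *
  g (fun j => if (j : ℕ) < p then pad s j else pad t (m + (j : ℕ) - 2 * p))

/-- The `p`-th arc contraction `f ⌢_p g`. -/
def arc (m n p : ℕ) (f : (Fin m → ℝ) → ℂ) (g : (Fin n → ℝ) → ℂ) :
    (Fin (m + n - 2 * p) → ℝ) → ℂ :=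
  fun t => ∫ s in posOrthant p, arcKer m n p f g t s

/-- The integrand of the star contraction of index `(p, p-1)`:
`(f ⋆_p^{p-1} g)(t₁,…,t_{m+n-2p+1})
  = ∫ f(t₁,…,t_{m-p},t_{m-p+1},s_{p-1},…,s₁) g(s₁,…,s_{p-1},t_{m-p+1},…,t_{m+n-2p+1}) ds`. -/
def starKer (m n p : ℕ) (f : (Fin m → ℝ) → ℂ) (g : (Fin n → ℝ) → ℂ)
    (t : Fin (m + n + 1 - 2 * p) → ℝ) (s : Fin (p - 1) → ℝ) : ℂ :=
  f (fun j => if (j : ℕ) < m - p + 1 then pad t j else pad s (m - 1 - (j : ℕ))) *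
  g (fun j => if (j : ℕ) < p - 1 then pad s j else pad t (m + (j : ℕ) + 1 - 2 * p))

/-- The star contraction `f ⋆_p^{p-1} g` of index `(p, p-1)`. -/
def starC (m n p : ℕ) (f : (Fin m → ℝ) → ℂ) (g : (Fin n → ℝ) → ℂ) :
    (Fin (m + n + 1 - 2 * p) → ℝ) → ℂ :=
  fun t => ∫ s in posOrthant (p - 1), starKer m n p f g t s

/-- The `q/2`-th arc contraction of two functions of `q` (even) variables,
expressed again as a function of `q` variables. -/
def contrHalf (q : ℕ) (f g : (Fin q → ℝ) → ℂ) : (Fin q → ℝ) → ℂ :=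
  fun t => ∫ s in posOrthant (q / 2),
    (f fun j => if (j : ℕ) < q - q / 2 then pad t j else pad s (q - 1 - (j : ℕ))) *
    (g fun j => if (j : ℕ) < q / 2 then pad s j else pad t (q + (j : ℕ) - 2 * (q / 2)))

/-- The full contraction `f ⌢_q g = ∫ f(t₁,…,t_q) g(t_q,…,t₁) dt` of two
functions of `q` variables. -/
def fullContr (q : ℕ) (f g : (Fin q → ℝ) → ℂ) : ℂ :=
  ∫ t in posOrthant q, f t * g fun i => t i.rev

/-- A `q`-dimensional square (cube): a product of `q` intervals of equal length. -/
def IsCube (q : ℕ) (S : Set (Fin q → ℝ)) : Prop :=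
  ∃ (a : Fin q → ℝ) (c : ℝ), S = Set.univ.pi fun i => Set.Icc (a i) (a i + c)

/-- One step of the left-bracketed iterated contraction, keeping track of the dimension. -/
def iterStep (q : ℕ) (acc : (d : ℕ) × ((Fin d → ℝ) → ℂ))
    (pr : ℕ × ((Fin q → ℝ) → ℂ)) : (d : ℕ) × ((Fin d → ℝ) → ℂ) :=
  ⟨acc.1 + q - 2 * pr.1, arc acc.1 q pr.1 acc.2 pr.2⟩

/-- The left-bracketed iterated contraction `(⋯((f₀ ⌢_{r₁} f₁) ⌢_{r₂} f₂)⋯) ⌢_{r_k} f_k`. -/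
def iterArc (q : ℕ) (f0 : (Fin q → ℝ) → ℂ) (l : List (ℕ × ((Fin q → ℝ) → ℂ))) :
    (d : ℕ) × ((Fin d → ℝ) → ℂ) :=
  l.foldl (iterStep q) ⟨q, f0⟩

/-- The value of a (`0`-dimensional, i.e. scalar) iterated contraction. -/
def scalarOf (x : (d : ℕ) × ((Fin d → ℝ) → ℂ)) : ℂ := x.2 fun _ => 0

/-!
Splitting the `2p` variables into two halves turns the half-contraction into the composition of
integral kernels, so by Cauchy–Schwarz it is a continuous bilinear product on `L²` (the
Hilbert–Schmidt estimate). For this product the functions `f_n^{(i)}`, which are bounded in `L²`,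
are asymptotically idempotent and mutually orthogonal. Hence a left-bracketed product
starting at `f_n^{(i)}` stays asymptotic to `f_n^{(i)}` while the index `i` repeats and tends to `0`
as soon as another index occurs.
-/

section AsymptoticallyOrthogonalIdempotents

open scoped InnerProductSpace

variable {𝕜 E α ι : Type*} [RCLike 𝕜] {l : Filter α} {a : α → ι → E} {x : α → E} {i : ι}

section Normed

variable [SeminormedAddCommGroup E] [NormedSpace 𝕜 E] {B : E →L[𝕜] E →L[𝕜] E}

lemma tendsto_bilin_zero_of_isBoundedUnder {y : α → E} (hx : Tendsto x l (𝓝 0))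
    (hy : IsBoundedUnder (· ≤ ·) l fun n => ‖y n‖) :
    Tendsto (fun n => B (x n) (y n)) l (𝓝 0) :=
  hx.op_zero_isBoundedUnder_le' hy (fun u v => B u v) ⟨‖B‖, B.le_opNorm₂⟩

lemma tendsto_foldl_bilin_zero (ha : ∀ i, IsBoundedUnder (· ≤ ·) l fun n => ‖a n i‖)
    {L : List ι} (hx : Tendsto x l (𝓝 0)) :
    Tendsto (fun n => (L.map (a n)).foldl (fun u v => B u v) (x n)) l (𝓝 0) := by
  induction L generalizing x with
  | nil => exact hx
  | cons j _ ih => exact ih (tendsto_bilin_zero_of_isBoundedUnder hx (ha j))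

lemma tendsto_foldl_bilin_sub_zero (ha : ∀ i, IsBoundedUnder (· ≤ ·) l fun n => ‖a n i‖)
    (hidem : Tendsto (fun n => B (a n i) (a n i) - a n i) l (𝓝 0)) {L : List ι}
    (hL : ∀ j ∈ L, i = j) (hx : Tendsto (fun n => x n - a n i) l (𝓝 0)) :
    Tendsto (fun n => (L.map (a n)).foldl (fun u v => B u v) (x n) - a n i) l (𝓝 0) := by
  induction L generalizing x with
  | nil => exact hx
  | cons j L ih =>
    obtain ⟨rfl, htail⟩ := List.forall_mem_cons.1 hL
    refine ih htail ?_
    simpa using (tendsto_bilin_zero_of_isBoundedUnder (B := B) hx (ha i)).add hidem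

lemma tendsto_foldl_bilin_zero_of_exists_ne
    (ha : ∀ i, IsBoundedUnder (· ≤ ·) l fun n => ‖a n i‖)
    (hidem : Tendsto (fun n => B (a n i) (a n i) - a n i) l (𝓝 0))
    (horth : ∀ j, i ≠ j → Tendsto (fun n => B (a n i) (a n j)) l (𝓝 0)) {L : List ι}
    (hL : ∃ j ∈ L, i ≠ j) (hx : Tendsto (fun n => x n - a n i) l (𝓝 0)) :
    Tendsto (fun n => (L.map (a n)).foldl (fun u v => B u v) (x n)) l (𝓝 0) := by
  induction L generalizing x with
  | nil => simp at hL
  | cons j L ih =>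
    have hxj : Tendsto (fun n => B (x n - a n i) (a n j)) l (𝓝 0) :=
      tendsto_bilin_zero_of_isBoundedUnder hx (ha j)
    by_cases hj : i = j
    · subst hj
      refine ih (by simpa using hL) ?_
      simpa using hxj.add hidem
    · refine tendsto_foldl_bilin_zero (L := L) ha ?_
      simpa using hxj.add (horth j hj)

end Normed

variable [SeminormedAddCommGroup E] [InnerProductSpace 𝕜 E]

lemma isBoundedUnder_norm_of_tendsto_inner_self {c : 𝕜}
    (hx : Tendsto (fun n => ⟪x n, x n⟫_𝕜) l (𝓝 c)) :
    IsBoundedUnder (· ≤ ·) l fun n => ‖x n‖ := by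
  simp only [norm_eq_sqrt_re_inner (𝕜 := 𝕜)]
  exact ((RCLike.continuous_re.tendsto c).comp hx).sqrt.isBoundedUnder_le

variable {B : E →L[𝕜] E →L[𝕜] E} [DecidableEq ι] {c : ι → 𝕜}

theorem tendsto_inner_foldl_bilin
    (hinner : ∀ i j, Tendsto (fun n => ⟪a n j, a n i⟫_𝕜) l (𝓝 (if i = j then c i else 0)))
    (hidem : ∀ i, Tendsto (fun n => B (a n i) (a n i) - a n i) l (𝓝 0))
    (horth : ∀ i j, i ≠ j → Tendsto (fun n => B (a n i) (a n j)) l (𝓝 0))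
    (i j : ι) (L : List ι) :
    Tendsto (fun n => ⟪a n j, (L.map (a n)).foldl (fun u v => B u v) (a n i)⟫_𝕜) l
      (𝓝 (if ∀ m ∈ j :: L, i = m then c i else 0)) := by
  have ha (i) : IsBoundedUnder (· ≤ ·) l fun n => ‖a n i‖ :=
    isBoundedUnder_norm_of_tendsto_inner_self (hinner i i)
  have inner_zero {x : α → E} (hx : Tendsto x l (𝓝 0)) :
      Tendsto (fun n => ⟪a n j, x n⟫_𝕜) l (𝓝 0) :=
    hx.op_zero_isBoundedUnder_le (ha j) (fun u v => ⟪v, u⟫_𝕜) fun u v => by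
      simpa only [mul_comm] using norm_inner_le_norm v u
  have hstart : Tendsto (fun n => a n i - a n i) l (𝓝 0) := by
    simpa only [sub_self] using tendsto_const_nhds
  by_cases hL : ∀ m ∈ L, i = m
  · have hlim := inner_zero (tendsto_foldl_bilin_sub_zero ha (hidem i) hL hstart)
    simpa only [List.forall_mem_cons, and_iff_left hL, inner_sub_right, sub_add_cancel,
      zero_add] using hlim.add (hinner i j)
  · have hne : ∃ m ∈ L, i ≠ m := by simpa using hL
    simpa [hL] using
      inner_zero (tendsto_foldl_bilin_zero_of_exists_ne ha (hidem i) (horth i) hne hstart)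

end AsymptoticallyOrthogonalIdempotents

section Slices

variable {X Y F : Type*} [MeasurableSpace X] [MeasurableSpace Y] [NormedAddCommGroup F]
  {μ : Measure X} {ν : Measure Y} [SFinite ν] {A : X × Y → F} {p : NNReal}

lemma aemeasurable_eLpNorm_prodMk_rpow (hp : p ≠ 0) (hA : AEStronglyMeasurable A (μ.prod ν)) :
    AEMeasurable (fun x => eLpNorm (fun y => A (x, y)) p ν ^ (p : ℝ)) μ := by
  simp_rw [eLpNorm_nnreal_pow_eq_lintegral hp]
  exact (hA.enorm.pow_const (p : ℝ)).lintegral_prod_right'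

lemma lintegral_eLpNorm_prodMk_rpow (hp : p ≠ 0) (hA : AEStronglyMeasurable A (μ.prod ν)) :
    ∫⁻ x, eLpNorm (fun y => A (x, y)) p ν ^ (p : ℝ) ∂μ = eLpNorm A p (μ.prod ν) ^ (p : ℝ) := by
  simp_rw [eLpNorm_nnreal_pow_eq_lintegral hp]
  exact (lintegral_prod _ (hA.enorm.pow_const (p : ℝ))).symm

lemma ae_memLp_prodMk (hp : p ≠ 0) (hA : MemLp A p (μ.prod ν)) :
    ∀ᵐ x ∂μ, MemLp (fun y => A (x, y)) p ν := by
  have hfin : ∫⁻ x, eLpNorm (fun y => A (x, y)) p ν ^ (p : ℝ) ∂μ ≠ ⊤ := by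
    rw [lintegral_eLpNorm_prodMk_rpow hp hA.1]
    exact ENNReal.rpow_ne_top_of_nonneg p.2 hA.eLpNorm_ne_top
  filter_upwards [hA.1.prodMk_left, ae_lt_top' (aemeasurable_eLpNorm_prodMk_rpow hp hA.1) hfin]
    with x hmeas hlt
  exact ⟨hmeas, (ENNReal.rpow_lt_top_iff_of_pos (by positivity)).1 hlt⟩

end Slices

lemma enorm_integral_mul_le_eLpNorm_mul_eLpNorm {X R : Type*} [MeasurableSpace X] [NormedRing R]
    [NormedSpace ℝ R] {μ : Measure X} {p q : ENNReal} [p.HolderTriple q 1] {f g : X → R}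
    (hf : AEStronglyMeasurable f μ) (hg : AEStronglyMeasurable g μ) :
    ‖∫ x, f x * g x ∂μ‖ₑ ≤ eLpNorm f p μ * eLpNorm g q μ :=
  calc
    ‖∫ x, f x * g x ∂μ‖ₑ ≤ eLpNorm (f • g) 1 μ := by
      rw [eLpNorm_one_eq_lintegral_enorm]
      exact enorm_integral_le_lintegral_enorm _
    _ ≤ eLpNorm f p μ * eLpNorm g q μ := eLpNorm_smul_le_mul_eLpNorm hg hf

section KernelComposition

variable {X Y Z 𝕜 : Type*} [MeasurableSpace Y] [RCLike 𝕜]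

/-- The composition of two integral kernels, that is, the kernel of the composite of the
corresponding integral operators. -/
def kernelComp (ν : Measure Y) (A : X × Y → 𝕜) (B : Y × Z → 𝕜) (w : X × Z) : 𝕜 :=
  ∫ y, A (w.1, y) * B (y, w.2) ∂ν

lemma kernelComp_smul_left (ν : Measure Y) (c : 𝕜) (A : X × Y → 𝕜) (B : Y × Z → 𝕜) :
    kernelComp ν (c • A) B = c • kernelComp ν A B := by
  funext w
  simp [kernelComp, mul_assoc, integral_const_mul]

lemma kernelComp_smul_right (ν : Measure Y) (c : 𝕜) (A : X × Y → 𝕜) (B : Y × Z → 𝕜) :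
    kernelComp ν A (c • B) = c • kernelComp ν A B := by
  funext w
  simp [kernelComp, mul_left_comm, integral_const_mul]

variable [MeasurableSpace X] [MeasurableSpace Z] {μ : Measure X} {ν : Measure Y} {ρ : Measure Z}
  [SFinite ν] {A A' : X × Y → 𝕜} {B B' : Y × Z → 𝕜}

lemma ae_memLp_prodMk_fst (hA : MemLp A 2 (μ.prod ν)) :
    ∀ᵐ w ∂μ.prod ρ, MemLp (fun y => A (w.1, y)) 2 ν :=
  Measure.quasiMeasurePreserving_fst.ae (ae_memLp_prodMk (p := 2) two_ne_zero hA)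

variable [SFinite ρ]

lemma ae_memLp_prodMk_snd (hB : MemLp B 2 (ν.prod ρ)) :
    ∀ᵐ w ∂μ.prod ρ, MemLp (fun y => B (y, w.2)) 2 ν :=
  Measure.quasiMeasurePreserving_snd.ae (ae_memLp_prodMk (p := 2) two_ne_zero
    (hB.comp_measurePreserving Measure.measurePreserving_swap))

lemma ae_integrable_kernelComp (hA : MemLp A 2 (μ.prod ν)) (hB : MemLp B 2 (ν.prod ρ)) :
    ∀ᵐ w ∂μ.prod ρ, Integrable (fun y => A (w.1, y) * B (y, w.2)) ν := by
  filter_upwards [ae_memLp_prodMk_fst hA, ae_memLp_prodMk_snd hB] with w hAw hBw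
  exact hAw.integrable_mul hBw

lemma kernelComp_congr_ae (hA : A =ᵐ[μ.prod ν] A') (hB : B =ᵐ[ν.prod ρ] B') :
    kernelComp ν A B =ᵐ[μ.prod ρ] kernelComp ν A' B' := by
  have hA' : ∀ᵐ w ∂μ.prod ρ, ∀ᵐ y ∂ν, A (w.1, y) = A' (w.1, y) :=
    Measure.quasiMeasurePreserving_fst.ae (Measure.ae_ae_of_ae_prod hA)
  have hB' : ∀ᵐ w ∂μ.prod ρ, ∀ᵐ y ∂ν, B (y, w.2) = B' (y, w.2) :=
    Measure.quasiMeasurePreserving_snd.ae (Measure.ae_ae_of_ae_prod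
      (Measure.measurePreserving_swap.quasiMeasurePreserving.ae hB))
  filter_upwards [hA', hB'] with w hAw hBw
  refine integral_congr_ae ?_
  filter_upwards [hAw, hBw] with y hAy hBy
  rw [hAy, hBy]

lemma kernelComp_add_left_ae (hA : MemLp A 2 (μ.prod ν)) (hA' : MemLp A' 2 (μ.prod ν))
    (hB : MemLp B 2 (ν.prod ρ)) :
    kernelComp ν (A + A') B =ᵐ[μ.prod ρ] kernelComp ν A B + kernelComp ν A' B := by
  filter_upwards [ae_integrable_kernelComp hA hB, ae_integrable_kernelComp hA' hB] with w hw hw'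
  simp only [kernelComp, Pi.add_apply, add_mul]
  exact integral_add hw hw'

lemma kernelComp_add_right_ae (hA : MemLp A 2 (μ.prod ν)) (hB : MemLp B 2 (ν.prod ρ))
    (hB' : MemLp B' 2 (ν.prod ρ)) :
    kernelComp ν A (B + B') =ᵐ[μ.prod ρ] kernelComp ν A B + kernelComp ν A B' := by
  filter_upwards [ae_integrable_kernelComp hA hB, ae_integrable_kernelComp hA hB'] with w hw hw'
  simp only [kernelComp, Pi.add_apply, mul_add]
  exact integral_add hw hw'

theorem eLpNorm_kernelComp_le (hA : MemLp A 2 (μ.prod ν)) (hB : MemLp B 2 (ν.prod ρ)) :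
    eLpNorm (kernelComp ν A B) 2 (μ.prod ρ) ≤
      eLpNorm A 2 (μ.prod ν) * eLpNorm B 2 (ν.prod ρ) := by
  have hA_int : ∫⁻ x, eLpNorm (fun y => A (x, y)) 2 ν ^ 2 ∂μ =
      eLpNorm A 2 (μ.prod ν) ^ 2 := by
    simpa using lintegral_eLpNorm_prodMk_rpow (p := 2) two_ne_zero hA.1
  have hB_int : ∫⁻ z, eLpNorm (fun y => B (y, z)) 2 ν ^ 2 ∂ρ =
      eLpNorm B 2 (ν.prod ρ) ^ 2 := by
    rw [← eLpNorm_comp_measurePreserving hB.1 Measure.measurePreserving_swap]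
    simpa [Function.comp_def] using
      lintegral_eLpNorm_prodMk_rpow (p := 2) two_ne_zero hB.1.prod_swap
  have hA_meas : AEMeasurable (fun x => eLpNorm (fun y => A (x, y)) 2 ν ^ 2) μ := by
    simpa using aemeasurable_eLpNorm_prodMk_rpow (p := 2) two_ne_zero hA.1
  have hB_meas : AEMeasurable (fun z => eLpNorm (fun y => B (y, z)) 2 ν ^ 2) ρ := by
    simpa using aemeasurable_eLpNorm_prodMk_rpow (p := 2) two_ne_zero hB.1.prod_swap
  rw [← ENNReal.pow_le_pow_left_iff two_ne_zero]
  calc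
    eLpNorm (kernelComp ν A B) 2 (μ.prod ρ) ^ 2
    _ = ∫⁻ w, ‖kernelComp ν A B w‖ₑ ^ 2 ∂μ.prod ρ := by
      simpa using
        eLpNorm_nnreal_pow_eq_lintegral (f := kernelComp ν A B) (μ := μ.prod ρ) (p := 2) two_ne_zero
    _ ≤ ∫⁻ w, eLpNorm (fun y => A (w.1, y)) 2 ν ^ 2 *
          eLpNorm (fun y => B (y, w.2)) 2 ν ^ 2 ∂μ.prod ρ := by
      refine lintegral_mono_ae ?_
      filter_upwards [ae_memLp_prodMk_fst hA, ae_memLp_prodMk_snd hB] with w hAw hBw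
      rw [← mul_pow]
      gcongr
      exact enorm_integral_mul_le_eLpNorm_mul_eLpNorm hAw.1 hBw.1
    _ = (∫⁻ x, eLpNorm (fun y => A (x, y)) 2 ν ^ 2 ∂μ) *
          ∫⁻ z, eLpNorm (fun y => B (y, z)) 2 ν ^ 2 ∂ρ :=
      lintegral_prod_mul hA_meas hB_meas
    _ = (eLpNorm A 2 (μ.prod ν) * eLpNorm B 2 (ν.prod ρ)) ^ 2 := by
      rw [hA_int, hB_int, mul_pow]

variable [SFinite μ]

lemma aestronglyMeasurable_kernelComp (hA : AEStronglyMeasurable A (μ.prod ν))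
    (hB : AEStronglyMeasurable B (ν.prod ρ)) :
    AEStronglyMeasurable (kernelComp ν A B) (μ.prod ρ) := by
  have hA' : AEStronglyMeasurable (fun w : (X × Z) × Y => A (w.1.1, w.2)) ((μ.prod ρ).prod ν) :=
    hA.comp_quasiMeasurePreserving
      (QuasiMeasurePreserving.prodMap Measure.quasiMeasurePreserving_fst (.id ν))
  have hB' : AEStronglyMeasurable (fun w : (X × Z) × Y => B (w.2, w.1.2)) ((μ.prod ρ).prod ν) :=
    hB.prod_swap.comp_quasiMeasurePreserving
      (QuasiMeasurePreserving.prodMap Measure.quasiMeasurePreserving_snd (.id ν))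
  exact (hA'.mul hB').integral_prod_right'

lemma memLp_kernelComp (hA : MemLp A 2 (μ.prod ν)) (hB : MemLp B 2 (ν.prod ρ)) :
    MemLp (kernelComp ν A B) 2 (μ.prod ρ) :=
  ⟨aestronglyMeasurable_kernelComp hA.1 hB.1,
    (eLpNorm_kernelComp_le hA hB).trans_lt (ENNReal.mul_lt_top hA.2 hB.2)⟩

variable (μ ν ρ) in
/-- Composition of square-integrable kernels as a continuous bilinear map on `L²` spaces. -/
def kernelCompL : Lp 𝕜 2 (μ.prod ν) →L[𝕜] Lp 𝕜 2 (ν.prod ρ) →L[𝕜] Lp 𝕜 2 (μ.prod ρ) :=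
  LinearMap.mkContinuous₂
    (LinearMap.mk₂ 𝕜 (fun A B => (memLp_kernelComp (Lp.memLp A) (Lp.memLp B)).toLp)
      (fun A A' B => by
        rw [← MemLp.toLp_add]
        exact MemLp.toLp_congr _ _ <| (kernelComp_congr_ae (Lp.coeFn_add A A') .rfl).trans <|
          kernelComp_add_left_ae (Lp.memLp A) (Lp.memLp A') (Lp.memLp B))
      (fun c A B => by
        rw [← MemLp.toLp_const_smul, MemLp.toLp_eq_toLp_iff, ← kernelComp_smul_left]
        exact kernelComp_congr_ae (Lp.coeFn_smul c A) .rfl)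
      (fun A B B' => by
        rw [← MemLp.toLp_add]
        exact MemLp.toLp_congr _ _ <| (kernelComp_congr_ae .rfl (Lp.coeFn_add B B')).trans <|
          kernelComp_add_right_ae (Lp.memLp A) (Lp.memLp B) (Lp.memLp B'))
      (fun c A B => by
        rw [← MemLp.toLp_const_smul, MemLp.toLp_eq_toLp_iff, ← kernelComp_smul_right]
        exact kernelComp_congr_ae .rfl (Lp.coeFn_smul c B)))
    1 fun A B => by
      rw [one_mul, LinearMap.mk₂_apply, Lp.norm_toLp, Lp.norm_def, Lp.norm_def,
        ← ENNReal.toReal_mul]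
      exact ENNReal.toReal_mono
        (ENNReal.mul_ne_top (Lp.eLpNorm_ne_top A) (Lp.eLpNorm_ne_top B))
        (eLpNorm_kernelComp_le (Lp.memLp A) (Lp.memLp B))

lemma kernelCompL_toLp_toLp (hA : MemLp A 2 (μ.prod ν)) (hB : MemLp B 2 (ν.prod ρ)) :
    kernelCompL μ ν ρ hA.toLp hB.toLp = (memLp_kernelComp hA hB).toLp :=
  MemLp.toLp_congr (memLp_kernelComp (Lp.memLp _) (Lp.memLp _)) _
    (kernelComp_congr_ae hA.coeFn_toLp hB.coeFn_toLp)

end KernelComposition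

section FinTuples

variable {X : Type*} [MeasurableSpace X]

/-- Concatenation of tuples, `Fin.append`, as a measurable equivalence. -/
def appendMeasurableEquiv (X : Type*) [MeasurableSpace X] (m n : ℕ) :
    (Fin m → X) × (Fin n → X) ≃ᵐ (Fin (m + n) → X) where
  toEquiv := Fin.appendEquiv m n
  measurable_toFun := measurable_pi_iff.2 fun i => by
    induction i using Fin.addCases <;>
      simp only [Fin.appendEquiv_apply, Fin.append_left, Fin.append_right] <;> fun_prop
  measurable_invFun := by
    simp only [Fin.appendEquiv, Equiv.coe_fn_symm_mk]
    fun_prop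

@[simp]
lemma appendMeasurableEquiv_apply {m n : ℕ} (z : (Fin m → X) × (Fin n → X)) :
    appendMeasurableEquiv X m n z = Fin.append z.1 z.2 :=
  rfl

lemma measurePreserving_appendMeasurableEquiv {m n : ℕ} (ν : Fin (m + n) → Measure X)
    [∀ i, SigmaFinite (ν i)] :
    MeasurePreserving (appendMeasurableEquiv X m n)
      ((Measure.pi fun i => ν (i.castAdd n)).prod (Measure.pi fun j => ν (j.natAdd m)))
      (Measure.pi ν) := by
  have happend : ⇑(appendMeasurableEquiv X m n) =
      MeasurableEquiv.piCongrLeft (fun _ => X) finSumFinEquiv ∘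
        (MeasurableEquiv.sumPiEquivProdPi fun _ => X).symm := by
    funext z i
    obtain ⟨i, rfl⟩ := finSumFinEquiv.surjective i
    rw [Function.comp_apply, MeasurableEquiv.piCongrLeft_apply_apply]
    cases i <;> simp [MeasurableEquiv.sumPiEquivProdPi, Equiv.sumPiEquivProdPi]
  rw [happend]
  exact (measurePreserving_piCongrLeft ν finSumFinEquiv).comp
    (measurePreserving_sumPiEquivProdPi_symm fun i => ν (finSumFinEquiv i))

lemma measurePreserving_comp_rev {n : ℕ} (ν : Fin n → Measure X) [∀ i, SigmaFinite (ν i)] :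
    MeasurePreserving (fun s : Fin n → X => s ∘ Fin.rev) (Measure.pi fun i => ν i.rev)
      (Measure.pi ν) := by
  have hrev : (fun s : Fin n → X => s ∘ Fin.rev) =
      MeasurableEquiv.piCongrLeft (fun _ => X) Fin.revPerm := by
    funext s i
    obtain ⟨i, rfl⟩ := Fin.revPerm.surjective i
    rw [MeasurableEquiv.piCongrLeft_apply_apply]
    simp
  rw [hrev]
  exact measurePreserving_piCongrLeft ν Fin.revPerm

end FinTuples

lemma μpos_eq_pi (n : ℕ) : μpos n = Measure.pi fun _ => volume.restrict (Set.Ici 0) := by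
  rw [← Measure.restrict_pi_pi, ← volume_pi, μpos]
  congr 1
  ext x
  exact Set.mem_univ_pi.symm

instance (n : ℕ) : SigmaFinite (μpos n) :=
  Restrict.sigmaFinite volume (posOrthant n)

lemma measurePreserving_append (m n : ℕ) :
    MeasurePreserving (appendMeasurableEquiv ℝ m n) ((μpos m).prod (μpos n)) (μpos (m + n)) := by
  simp only [μpos_eq_pi]
  exact measurePreserving_appendMeasurableEquiv fun _ => volume.restrict (Set.Ici 0)

/-- The concatenation `(t, s) ↦ (t₁, …, tₘ, sₙ, …, s₁)`, in which the first factor of a contraction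
is evaluated. -/
def appendRev {m n : ℕ} (z : (Fin m → ℝ) × (Fin n → ℝ)) : Fin (m + n) → ℝ :=
  Fin.append z.1 (z.2 ∘ Fin.rev)

lemma measurePreserving_appendRev (m n : ℕ) :
    MeasurePreserving appendRev ((μpos m).prod (μpos n)) (μpos (m + n)) := by
  have hrev : MeasurePreserving (fun s : Fin n → ℝ => s ∘ Fin.rev) (μpos n) (μpos n) := by
    simp only [μpos_eq_pi]
    exact measurePreserving_comp_rev fun _ => volume.restrict (Set.Ici 0)
  exact (measurePreserving_append m n).comp ((MeasurePreserving.id _).prod hrev)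

lemma pad_eq_of_val_eq {k a : ℕ} (t : Fin k → ℝ) {i : Fin k} (hi : (i : ℕ) = a) :
    pad t a = t i := by
  subst hi
  simp [pad]

lemma contrHalf_append (p : ℕ) (F G : (Fin (p + p) → ℝ) → ℂ) (t u : Fin p → ℝ) :
    contrHalf (p + p) F G (Fin.append t u) =
      ∫ s, F (appendRev (t, s)) * G (Fin.append s u) ∂μpos p := by
  have hp : (p + p) / 2 = p := by omega
  unfold contrHalf μpos
  rw [hp]
  congr 1 with s
  congr 2 <;> funext i
  · induction i using Fin.addCases with
    | left i =>
      rw [if_pos (by simp), pad_eq_of_val_eq _ rfl, appendRev, Fin.append_left, Fin.append_left]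
    | right i =>
      have hrev : (i.rev : ℕ) = p + p - 1 - i.natAdd p := by simp; omega
      rw [if_neg (by simp), pad_eq_of_val_eq _ hrev, appendRev, Fin.append_right,
        Function.comp_apply]
  · induction i using Fin.addCases with
    | left i => rw [if_pos (by simp), Fin.val_castAdd, pad_eq_of_val_eq _ rfl, Fin.append_left]
    | right i =>
      have hshift : (i.natAdd p : ℕ) = p + p + i.natAdd p - 2 * p := by omega
      rw [if_neg (by simp), pad_eq_of_val_eq _ hshift, Fin.append_right, Fin.append_right]

section HalfContraction

variable {p : ℕ} {F G : (Fin (p + p) → ℝ) → ℂ}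

lemma contrHalf_eq_kernelComp (F G : (Fin (p + p) → ℝ) → ℂ) :
    contrHalf (p + p) F G =
      kernelComp (μpos p) (F ∘ appendRev) (G ∘ appendMeasurableEquiv ℝ p p) ∘
        (appendMeasurableEquiv ℝ p p).symm := by
  refine (appendMeasurableEquiv ℝ p p).eq_comp_symm _ _ |>.2 ?_
  funext w
  exact contrHalf_append p F G w.1 w.2

lemma memLp_contrHalf (hF : MemLp F 2 (μpos (p + p))) (hG : MemLp G 2 (μpos (p + p))) :
    MemLp (contrHalf (p + p) F G) 2 (μpos (p + p)) := by
  rw [contrHalf_eq_kernelComp]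
  exact (memLp_kernelComp (hF.comp_measurePreserving (measurePreserving_appendRev p p))
    (hG.comp_measurePreserving (measurePreserving_append p p))).comp_measurePreserving
      (measurePreserving_append p p).symm

/-- The half-contraction of functions of `p + p` variables as a continuous bilinear map on `L²`. -/
def contrHalfL (p : ℕ) :
    Lp ℂ 2 (μpos (p + p)) →L[ℂ] Lp ℂ 2 (μpos (p + p)) →L[ℂ] Lp ℂ 2 (μpos (p + p)) :=
  (ContinuousLinearMap.compL ℂ _ _ _
    (Lp.compMeasurePreservingₗᵢ ℂ _ (measurePreserving_append p p).symm).toContinuousLinearMap) ∘L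
      (kernelCompL (μpos p) (μpos p) (μpos p)).bilinearComp
        (Lp.compMeasurePreservingₗᵢ ℂ _ (measurePreserving_appendRev p p)).toContinuousLinearMap
        (Lp.compMeasurePreservingₗᵢ ℂ _ (measurePreserving_append p p)).toContinuousLinearMap

lemma contrHalfL_toLp_toLp (hF : MemLp F 2 (μpos (p + p))) (hG : MemLp G 2 (μpos (p + p))) :
    contrHalfL p hF.toLp hG.toLp = (memLp_contrHalf hF hG).toLp := by
  have hF' := hF.comp_measurePreserving (measurePreserving_appendRev p p)
  have hG' := hG.comp_measurePreserving (measurePreserving_append p p)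
  calc
    contrHalfL p hF.toLp hG.toLp
    _ = Lp.compMeasurePreserving _ (measurePreserving_append p p).symm
          (kernelCompL (μpos p) (μpos p) (μpos p) hF'.toLp hG'.toLp) := rfl
    _ = (memLp_contrHalf hF hG).toLp := by
      rw [kernelCompL_toLp_toLp, Lp.toLp_compMeasurePreserving]
      simp only [contrHalf_eq_kernelComp]

variable {ι : Type*} {f : ι → (Fin (p + p) → ℝ) → ℂ}

lemma memLp_foldl_contrHalf (hf : ∀ i, MemLp (f i) 2 (μpos (p + p)))
    (hG : MemLp G 2 (μpos (p + p))) (L : List ι) :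
    MemLp ((L.map f).foldl (contrHalf (p + p)) G) 2 (μpos (p + p)) := by
  induction L generalizing G with
  | nil => exact hG
  | cons i _ ih => exact ih (memLp_contrHalf hG (hf i))

lemma foldl_contrHalfL_toLp (hf : ∀ i, MemLp (f i) 2 (μpos (p + p)))
    (hG : MemLp G 2 (μpos (p + p))) (L : List ι) :
    (L.map fun i => (hf i).toLp).foldl (fun u v => contrHalfL p u v) hG.toLp =
      (memLp_foldl_contrHalf hf hG L).toLp := by
  induction L generalizing G with
  | nil => rfl
  | cons i _ ih =>
    simp only [List.map_cons, List.foldl_cons, contrHalfL_toLp_toLp]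
    exact ih (memLp_contrHalf hG (hf i))

end HalfContraction

section L2

variable {q : ℕ} {f g : (Fin q → ℝ) → ℂ}

lemma inner_toLp_toLp (hf : MemLp f 2 (μpos q)) (hg : MemLp g 2 (μpos q)) :
    inner ℂ hg.toLp hf.toLp = L2inner q f g := by
  rw [L2.inner_def, L2inner]
  refine integral_congr_ae ?_
  filter_upwards [hf.coeFn_toLp, hg.coeFn_toLp] with x hfx hgx
  rw [hfx, hgx, RCLike.inner_apply]

lemma norm_toLp_eq_L2norm (hf : MemLp f 2 (μpos q)) : ‖hf.toLp‖ = L2norm q f := by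
  have hself : L2inner q f f = ((∫ x, ‖f x‖ ^ 2 ∂μpos q : ℝ) : ℂ) := by
    simp only [L2inner, Complex.mul_conj', ← Complex.ofReal_pow, integral_complex_ofReal]
  rw [norm_eq_sqrt_re_inner (𝕜 := ℂ), inner_toLp_toLp, hself, L2norm, RCLike.re_to_complex,
    Complex.ofReal_re]

end L2

lemma forall_mem_idx_list_iff {ι : Type*} (k : ℕ) (idx : ℕ → ι) :
    (∀ m ∈ idx (k + 1) :: (List.range (k - 1)).map (fun j => idx (j + 2)), idx 1 = m) ↔
      ∀ a b, 1 ≤ a → a ≤ k + 1 → 1 ≤ b → b ≤ k + 1 → idx a = idx b := by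
  simp only [List.forall_mem_cons, List.forall_mem_map, List.mem_range]
  refine ⟨fun ⟨hlast, hmid⟩ => ?_, fun h => ?_⟩
  · have hfirst (a : ℕ) (ha : 1 ≤ a) (hak : a ≤ k + 1) : idx 1 = idx a := by
      obtain rfl | rfl | ⟨j, hj, rfl⟩ : a = 1 ∨ a = k + 1 ∨ ∃ j < k - 1, a = j + 2 := by
        by_cases a = 1 ∨ a = k + 1
        · tauto
        · exact .inr (.inr ⟨a - 2, by omega⟩)
      exacts [rfl, hlast, hmid j hj]
    exact fun a b ha hak hb hbk => (hfirst a ha hak).symm.trans (hfirst b hb hbk)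
  · exact ⟨h _ _ le_rfl (by omega) (by omega) le_rfl,
      fun j hj => h _ _ le_rfl (by omega) (by omega) (by omega)⟩

theorem iterated_half_contraction_inner_limit_general {α ι : Type*} [DecidableEq ι] {l : Filter α}
    {q : ℕ} (hq : Even q) {lam : ι → ℂ} {f : α → ι → (Fin q → ℝ) → ℂ}
    (hmem : ∀ n i, MemLp (f n i) 2 (μpos q))
    (hinner : ∀ i j, Tendsto (fun n => L2inner q (f n i) (f n j)) l
      (𝓝 (if i = j then lam i else 0)))
    (hdiag : ∀ i, Tendsto (fun n => L2norm q (contrHalf q (f n i) (f n i) - f n i)) l (𝓝 0))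
    (hoff : ∀ i j, i ≠ j → Tendsto (fun n => L2norm q (contrHalf q (f n i) (f n j))) l (𝓝 0))
    (i j : ι) (L : List ι) :
    ((∀ m ∈ j :: L, i = m) → Tendsto
      (fun n => L2inner q ((L.map (f n)).foldl (contrHalf q) (f n i)) (f n j)) l (𝓝 (lam i))) ∧
    ((¬ ∀ m ∈ j :: L, i = m) → Tendsto
      (fun n => L2inner q ((L.map (f n)).foldl (contrHalf q) (f n i)) (f n j)) l (𝓝 0)) := by
  obtain ⟨p, rfl⟩ := hq
  have inner_lim (i j) : Tendsto (fun n => inner ℂ (hmem n j).toLp (hmem n i).toLp) l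
      (𝓝 (if i = j then lam i else 0)) := by
    simpa only [inner_toLp_toLp] using hinner i j
  have idem (i) : Tendsto (fun n => contrHalfL p (hmem n i).toLp (hmem n i).toLp -
      (hmem n i).toLp) l (𝓝 0) := by
    rw [tendsto_zero_iff_norm_tendsto_zero]
    simpa only [contrHalfL_toLp_toLp, ← MemLp.toLp_sub, norm_toLp_eq_L2norm] using hdiag i
  have orth (i j) (hij : i ≠ j) :
      Tendsto (fun n => contrHalfL p (hmem n i).toLp (hmem n j).toLp) l (𝓝 0) := by
    rw [tendsto_zero_iff_norm_tendsto_zero]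
    simpa only [contrHalfL_toLp_toLp, norm_toLp_eq_L2norm] using hoff i j hij
  have hlim := tendsto_inner_foldl_bilin inner_lim idem orth i j L
  simp only [foldl_contrHalfL_toLp, inner_toLp_toLp] at hlim
  exact ⟨fun h => by rwa [if_pos h] at hlim, fun h => by rwa [if_neg h] at hlim⟩

/-- iterated `q/2`-contractions paired with one more function converge to
`λ_{i₁}` when all indices agree, and to `0` otherwise. -/
theorem iterated_half_contraction_inner_limit (q : ℕ) (hq2 : 2 ≤ q) (hqe : q % 2 = 0)
    (lam : ℕ → ℝ) (hlam : ∀ i, 0 < lam i)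
    (f : ℕ → ℕ → (Fin q → ℝ) → ℂ)
    (hmem : ∀ n i, MeasureTheory.MemLp (f n i) 2 (μpos q))
    (hsym : ∀ n i, IsSymmFn q (f n i))
    (hinner : ∀ i j, Filter.Tendsto (fun n => L2inner q (f n i) (f n j)) Filter.atTop
      (nhds (if i = j then (lam i : ℂ) else 0)))
    (hdiag : ∀ i, Filter.Tendsto
      (fun n => L2norm q (fun t => contrHalf q (f n i) (f n i) t - f n i t))
      Filter.atTop (nhds 0))
    (hoff : ∀ i j, i ≠ j → Filter.Tendsto
      (fun n => L2norm q (contrHalf q (f n i) (f n j))) Filter.atTop (nhds 0))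
    (k : ℕ) (hk : 1 ≤ k) (idx : ℕ → ℕ) :
    ((∀ a b, 1 ≤ a → a ≤ k + 1 → 1 ≤ b → b ≤ k + 1 → idx a = idx b) →
      Filter.Tendsto (fun n => L2inner q
          (((List.range (k - 1)).map fun j => f n (idx (j + 2))).foldl
            (contrHalf q) (f n (idx 1)))
          (f n (idx (k + 1))))
        Filter.atTop (nhds (lam (idx 1) : ℂ))) ∧
    ((¬ ∀ a b, 1 ≤ a → a ≤ k + 1 → 1 ≤ b → b ≤ k + 1 → idx a = idx b) →
      Filter.Tendsto (fun n => L2inner q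
          (((List.range (k - 1)).map fun j => f n (idx (j + 2))).foldl
            (contrHalf q) (f n (idx 1)))
          (f n (idx (k + 1))))
        Filter.atTop (nhds 0)) := by
  simpa only [forall_mem_idx_list_iff, List.map_map, Function.comp_def] using
    iterated_half_contraction_inner_limit_general (Nat.even_iff.2 hqe)
      (lam := fun i => (lam i : ℂ)) hmem hinner hdiag hoff (idx 1) (idx (k + 1))
      ((List.range (k - 1)).map fun j => idx (j + 2))

end
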